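/- Let (Ω_i, μ_i) (i = 1,…,d) be σ-finite measure spaces with product Ω, let p⃗ = (p₁,…,p_d) with 0 < p_i ≤ ∞, and let 0 < q₁ ≤ q₂ ≤ ∞. Then L_{p⃗,q₁} ↪ L_{p⃗,q₂}: in fact ‖f‖_{L_{p⃗,∞}} ≤ q₁^{1/q₁} ‖f‖_{L_{p⃗,q₁}} for all measurable f, and if q₁ < q₂ < ∞ then ‖f‖_{L_{p⃗,q₂}} ≤ q₁^{(q₂−q₁)/(q₁ q₂)} ‖f‖_{L_{p⃗,q₁}} for all measurable f. -/

import Mathlib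

open MeasureTheory ENNReal Set Filter

noncomputable section

/-- One-variable `L_p` quasi-norm of an `ℝ≥0∞`-valued function (essential sup if `p = ∞`). -/
def lpNorm1 {α : Type} [MeasurableSpace α] (p : ℝ≥0∞) (μ : Measure α)
    (g : α → ℝ≥0∞) : ℝ≥0∞ :=
  if p = ∞ then essSup g μ else (∫⁻ x, g x ^ p.toReal ∂μ) ^ (1 / p.toReal)

/-- Mixed Lebesgue quasi-norm of an `ℝ≥0∞`-valued function on a product space:
the first coordinate is integrated innermost. -/
def mixedNormE : {d : ℕ} → {α : Fin d → Type} →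
    [inst : ∀ i, MeasurableSpace (α i)] → (μ : ∀ i, Measure (α i)) →
    (p : Fin d → ℝ≥0∞) → ((∀ i, α i) → ℝ≥0∞) → ℝ≥0∞
  | 0, _, _, _, _, f => f finZeroElim
  | (d + 1), α, inst, μ, p, f =>
      @mixedNormE d (fun i => α i.succ) (fun i => inst i.succ)
        (fun i => μ i.succ) (fun i => p i.succ)
        (fun y => lpNorm1 (p 0) (μ 0) fun x => f (Fin.cons x y))

/-- Mixed Lebesgue quasi-norm `‖f‖_{p⃗}` of a real-valued function. -/
def mixedNorm {d : ℕ} {α : Fin d → Type} [∀ i, MeasurableSpace (α i)]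
    (μ : ∀ i, Measure (α i)) (p : Fin d → ℝ≥0∞) (f : (∀ i, α i) → ℝ) : ℝ≥0∞ :=
  mixedNormE μ p fun x => ENNReal.ofReal |f x|

/-- Mixed Lorentz quasi-norm `‖f‖_{L_{p⃗,q}}`. -/
def mixedLorentzNorm {d : ℕ} {α : Fin d → Type} [∀ i, MeasurableSpace (α i)]
    (μ : ∀ i, Measure (α i)) (p : Fin d → ℝ≥0∞) (q : ℝ≥0∞) (f : (∀ i, α i) → ℝ) : ℝ≥0∞ :=
  if q = ∞ then
    ⨆ (u : ℝ) (_ : 0 < u),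
      ENNReal.ofReal u * mixedNorm μ p ({x | u < |f x|}.indicator fun _ => (1 : ℝ))
  else
    (∫⁻ u in Set.Ioi (0 : ℝ),
        (ENNReal.ofReal u * mixedNorm μ p ({x | u < |f x|}.indicator fun _ => (1 : ℝ))) ^ q.toReal
          / ENNReal.ofReal u) ^ (1 / q.toReal)

/-- Non-increasing rearrangement `f^*(t)` (with `inf ∅ = ∞`). -/
def rearr {α : Type} [MeasurableSpace α] (μ : Measure α) (f : α → ℝ) (t : ℝ) : ℝ≥0∞ :=
  sInf {s : ℝ≥0∞ | μ {x | s < ENNReal.ofReal |f x|} ≤ ENNReal.ofReal t}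

/-- Growth envelope function of the quasi-normed function space given by the quasi-norm `N`. -/
def growthEnv {α : Type} [MeasurableSpace α] (μ : Measure α)
    (N : (α → ℝ) → ℝ≥0∞) (t : ℝ) : ℝ≥0∞ :=
  ⨆ (f : α → ℝ) (_ : Measurable f) (_ : N f ≤ 1), rearr μ f t

/-- The Hardy-type functional `( ∫_0^ε ( t^{pinv} f^*(t) )^v dt/t )^{1/v}`,
with the usual `sup` modification for `v = ∞`. -/
def hardy {α : Type} [MeasurableSpace α] (μ : Measure α)
    (pinv : ℝ) (v : ℝ≥0∞) (ε : ℝ) (f : α → ℝ) : ℝ≥0∞ :=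
  if v = ∞ then ⨆ (t : ℝ) (_ : t ∈ Set.Ioo 0 ε), ENNReal.ofReal t ^ pinv * rearr μ f t
  else
    (∫⁻ t in Set.Ioo (0 : ℝ) ε,
        (ENNReal.ofReal t ^ pinv * rearr μ f t) ^ v.toReal / ENNReal.ofReal t) ^ (1 / v.toReal)

/-- The modular `ϱ_{p(·)}(f) = ∫ |f(x)|^{p(x)} dμ(x)`. -/
def varModular {α : Type} [MeasurableSpace α] (μ : Measure α)
    (p : α → ℝ) (f : α → ℝ) : ℝ≥0∞ :=
  ∫⁻ x, ENNReal.ofReal (|f x| ^ p x) ∂μ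

/-- The variable Lebesgue quasi-norm `‖f‖_{p(·)}`. -/
def varNorm {α : Type} [MeasurableSpace α] (μ : Measure α)
    (p : α → ℝ) (f : α → ℝ) : ℝ≥0∞ :=
  ⨅ (l : ℝ) (_ : 0 < l) (_ : varModular μ p (fun x => f x / l) ≤ 1), ENNReal.ofReal l

/-- The variable Lorentz quasi-norm `‖f‖_{L_{p(·),q}}`. -/
def varLorentzNorm {α : Type} [MeasurableSpace α] (μ : Measure α)
    (p : α → ℝ) (q : ℝ≥0∞) (f : α → ℝ) : ℝ≥0∞ :=
  if q = ∞ then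
    ⨆ (u : ℝ) (_ : 0 < u),
      ENNReal.ofReal u * varNorm μ p ({x | u < |f x|}.indicator fun _ => (1 : ℝ))
  else
    (∫⁻ u in Set.Ioi (0 : ℝ),
        (ENNReal.ofReal u * varNorm μ p ({x | u < |f x|}.indicator fun _ => (1 : ℝ))) ^ q.toReal
          / ENNReal.ofReal u) ^ (1 / q.toReal)

/-- Local log-Hölder continuity at a point `x₀`. -/
def LocLogHolderAt {E : Type} [PseudoMetricSpace E] (p : E → ℝ) (x₀ : E) : Prop :=
  ∃ C₀ > (0 : ℝ), ∀ x, dist x x₀ < 1 / 2 → |p x - p x₀| ≤ C₀ / (-Real.log (dist x x₀))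

/-- Local log-Hölder continuity (at every point, with a uniform constant). -/
def LocLogHolder {E : Type} [PseudoMetricSpace E] (p : E → ℝ) : Prop :=
  ∃ C₀ > (0 : ℝ), ∀ x y, dist x y < 1 / 2 → |p x - p y| ≤ C₀ / (-Real.log (dist x y))

end

theorem lpNorm1_mono_aux {α : Type} [MeasurableSpace α] (p : ℝ≥0∞) (μ : Measure α)
    {g h : α → ℝ≥0∞} (hgh : ∀ x, g x ≤ h x) : lpNorm1 p μ g ≤ lpNorm1 p μ h := by
  unfold lpNorm1
  split_ifs with hp
  · exact essSup_mono_ae (Filter.Eventually.of_forall hgh)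
  · apply ENNReal.rpow_le_rpow _ (by positivity)
    exact lintegral_mono fun x => ENNReal.rpow_le_rpow (hgh x) ENNReal.toReal_nonneg

theorem mixedNormE_mono_aux : ∀ {d : ℕ} {α : Fin d → Type} [inst : ∀ i, MeasurableSpace (α i)]
    (μ : ∀ i, Measure (α i)) (p : Fin d → ℝ≥0∞) {g h : (∀ i, α i) → ℝ≥0∞}
    (_ : ∀ x, g x ≤ h x), mixedNormE μ p g ≤ mixedNormE μ p h
  | 0, _, _, _, _, _, _, hgh => by
      simp only [mixedNormE]
      exact hgh _
  | (d + 1), α, inst, μ, p, g, h, hgh => by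
      simp only [mixedNormE]
      apply mixedNormE_mono_aux
      intro y
      exact lpNorm1_mono_aux _ _ fun x => hgh _

theorem lintegral_pow_aux (q u : ℝ) (hq : 0 < q) (hu : 0 < u) :
    ∫⁻ s in Set.Ioo (0 : ℝ) u, ENNReal.ofReal s ^ q / ENNReal.ofReal s
      = ENNReal.ofReal u ^ q / ENNReal.ofReal q := by
  have h1 : ∫⁻ s in Set.Ioo (0 : ℝ) u, ENNReal.ofReal s ^ q / ENNReal.ofReal s
      = ∫⁻ s in Set.Ioo (0 : ℝ) u, ENNReal.ofReal (s ^ (q - 1)) := by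
    apply setLIntegral_congr_fun measurableSet_Ioo
    intro s hs
    have hs0 : 0 < s := hs.1
    simp only
    rw [ENNReal.ofReal_rpow_of_pos hs0, ← ENNReal.ofReal_div_of_pos hs0,
      Real.rpow_sub_one hs0.ne']
  have hint : IntervalIntegrable (fun s : ℝ => s ^ (q - 1)) volume 0 u :=
    intervalIntegral.intervalIntegrable_rpow' (by linarith)
  rw [h1, ← ofReal_integral_eq_lintegral_ofReal]
  · rw [← integral_Ioc_eq_integral_Ioo, ← intervalIntegral.integral_of_le hu.le,
      integral_rpow (Or.inl (by linarith))]
    rw [ENNReal.ofReal_rpow_of_pos hu, ← ENNReal.ofReal_div_of_pos hq]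
    congr 1
    rw [sub_add_cancel, Real.zero_rpow hq.ne', sub_zero]
  · exact ((intervalIntegrable_iff_integrableOn_Ioc_of_le hu.le).1 hint).mono_set
      Ioo_subset_Ioc_self
  · filter_upwards [ae_restrict_mem measurableSet_Ioo] with s hs
    exact Real.rpow_nonneg hs.1.le _

theorem weak_le_aux (N : ℝ → ℝ≥0∞) (hN : Antitone N) (q u : ℝ) (hq : 0 < q) (hu : 0 < u) :
    ENNReal.ofReal u * N u ≤ ENNReal.ofReal q ^ (1 / q) *
      (∫⁻ s in Set.Ioi (0 : ℝ), (ENNReal.ofReal s * N s) ^ q / ENNReal.ofReal s) ^ (1 / q) := by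
  have hq0 : ENNReal.ofReal q ≠ 0 := by simpa using hq
  have key : (ENNReal.ofReal u * N u) ^ q ≤ ENNReal.ofReal q *
      ∫⁻ s in Set.Ioi (0 : ℝ), (ENNReal.ofReal s * N s) ^ q / ENNReal.ofReal s := by
    have h2 : (N u) ^ q * ∫⁻ s in Set.Ioo (0 : ℝ) u, ENNReal.ofReal s ^ q / ENNReal.ofReal s ≤
        ∫⁻ s in Set.Ioi (0 : ℝ), (ENNReal.ofReal s * N s) ^ q / ENNReal.ofReal s := by
      refine (lintegral_const_mul_le _ _).trans ?_
      refine le_trans ?_ (lintegral_mono_set (fun s (hs : s ∈ Set.Ioo (0 : ℝ) u) => hs.1))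
      refine setLIntegral_mono' measurableSet_Ioo ?_
      intro s hs
      rw [ENNReal.mul_rpow_of_nonneg _ _ hq.le, mul_comm (_ ^ q) (N s ^ q), mul_div_assoc]
      gcongr
      exact hN hs.2.le
    rw [lintegral_pow_aux q u hq hu] at h2
    calc (ENNReal.ofReal u * N u) ^ q
        = ENNReal.ofReal q * (N u ^ q * (ENNReal.ofReal u ^ q / ENNReal.ofReal q)) := by
          rw [ENNReal.mul_rpow_of_nonneg _ _ hq.le, mul_left_comm,
            ENNReal.mul_div_cancel hq0 ENNReal.ofReal_ne_top, mul_comm]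
      _ ≤ _ := by gcongr
  rw [← ENNReal.mul_rpow_of_nonneg _ _ (by positivity : 0 ≤ 1 / q)]
  rw [one_div, ENNReal.le_rpow_inv_iff hq]
  exact key

theorem strong_le_aux (N : ℝ → ℝ≥0∞) (hN : Antitone N) (q r : ℝ) (hq : 0 < q) (hqr : q < r) :
    (∫⁻ s in Set.Ioi (0 : ℝ), (ENNReal.ofReal s * N s) ^ r / ENNReal.ofReal s) ^ (1 / r) ≤
      ENNReal.ofReal q ^ ((r - q) / (q * r)) *
      (∫⁻ s in Set.Ioi (0 : ℝ), (ENNReal.ofReal s * N s) ^ q / ENNReal.ofReal s) ^ (1 / q) := by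
  have hr : 0 < r := hq.trans hqr
  have hm : Measurable N := hN.measurable
  set I := ∫⁻ s in Set.Ioi (0 : ℝ), (ENNReal.ofReal s * N s) ^ q / ENNReal.ofReal s with hI
  set M := ENNReal.ofReal q ^ (1 / q) * I ^ (1 / q) with hM
  have h1 : ∫⁻ s in Set.Ioi (0 : ℝ), (ENNReal.ofReal s * N s) ^ r / ENNReal.ofReal s
      ≤ M ^ (r - q) * I := by
    rw [hI, ← lintegral_const_mul _ (by fun_prop)]
    refine setLIntegral_mono' measurableSet_Ioi ?_
    intro s hs
    have h := weak_le_aux N hN q s hq hs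
    rw [← hI, ← hM] at h
    rw [← mul_div_assoc]
    gcongr
    calc (ENNReal.ofReal s * N s) ^ r
        = (ENNReal.ofReal s * N s) ^ (r - q) * (ENNReal.ofReal s * N s) ^ q := by
          rw [← ENNReal.rpow_add_of_nonneg _ _ (by linarith) hq.le, sub_add_cancel]
      _ ≤ _ := by
          gcongr
  refine (ENNReal.rpow_le_rpow h1 (by positivity : 0 ≤ 1 / r)).trans (le_of_eq ?_)
  have hd : 0 ≤ r - q := by linarith
  rw [hM, ENNReal.mul_rpow_of_nonneg _ _ (by positivity : 0 ≤ 1 / r), ← ENNReal.rpow_mul,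
    ENNReal.mul_rpow_of_nonneg _ _ (by positivity), ← ENNReal.rpow_mul, ← ENNReal.rpow_mul,
    mul_assoc, ← ENNReal.rpow_add_of_nonneg _ _ (by positivity) (by positivity)]
  congr 2 <;> field_simp
  ring

/-- Embedding of mixed Lorentz spaces: for `0 < q₁ ≤ q₂ ≤ ∞` one has
`L_{p⃗,q₁} ↪ L_{p⃗,q₂}`; in fact `‖f‖_{L_{p⃗,∞}} ≤ q₁^{1/q₁} ‖f‖_{L_{p⃗,q₁}}`, and if
`q₁ < q₂ < ∞` then `‖f‖_{L_{p⃗,q₂}} ≤ q₁^{(q₂−q₁)/(q₁q₂)} ‖f‖_{L_{p⃗,q₁}}`. -/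
theorem statement5 (d : ℕ) (α : Fin d → Type) [∀ i, MeasurableSpace (α i)]
    (μ : ∀ i, Measure (α i)) [∀ i, SigmaFinite (μ i)]
    (p : Fin d → ℝ≥0∞) (hp : ∀ i, 0 < p i)
    (q₁ q₂ : ℝ≥0∞) (hq₁ : 0 < q₁) (hq₁₂ : q₁ ≤ q₂) :
    (∀ f : (∀ i, α i) → ℝ, Measurable f →
      mixedLorentzNorm μ p ∞ f ≤ q₁ ^ (1 / q₁.toReal) * mixedLorentzNorm μ p q₁ f) ∧
    (q₁ < q₂ → q₂ < ∞ → ∀ f : (∀ i, α i) → ℝ, Measurable f →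
      mixedLorentzNorm μ p q₂ f ≤
        q₁ ^ ((q₂.toReal - q₁.toReal) / (q₁.toReal * q₂.toReal)) *
          mixedLorentzNorm μ p q₁ f) := by
  have hanti : ∀ f : (∀ i, α i) → ℝ, Antitone fun u : ℝ =>
      mixedNorm μ p ({x | u < |f x|}.indicator fun _ => (1 : ℝ)) := by
    intro f u v huv
    refine mixedNormE_mono_aux μ p fun x => ?_
    by_cases hv : v < |f x|
    · simp [Set.indicator, hv, huv.trans_lt hv]
    · simp [Set.indicator, hv]
  constructor
  · intro f _
    by_cases h1 : q₁ = ∞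
    · simp [h1]
    · have hq : 0 < q₁.toReal := ENNReal.toReal_pos hq₁.ne' h1
      rw [mixedLorentzNorm, mixedLorentzNorm, if_pos rfl, if_neg h1]
      refine iSup₂_le fun u hu => ?_
      have h := weak_le_aux _ (hanti f) q₁.toReal u hq hu
      rwa [ENNReal.ofReal_toReal h1] at h
  · intro h12 h2 f _
    have h1 : q₁ ≠ ∞ := (h12.trans h2).ne
    have hq : 0 < q₁.toReal := ENNReal.toReal_pos hq₁.ne' h1
    have hqr : q₁.toReal < q₂.toReal := (ENNReal.toReal_lt_toReal h1 h2.ne).2 h12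
    rw [mixedLorentzNorm, mixedLorentzNorm, if_neg h2.ne, if_neg h1]
    have h := strong_le_aux _ (hanti f) q₁.toReal q₂.toReal hq hqr
    rwa [ENNReal.ofReal_toReal h1] at h
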